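/- arXiv:math/0501254 — 4 statements merged into one kernel-verified Lean document; each statement's English description precedes it below -/
import Mathlib

section
/- Let (φ, φ̃) be a morphism of G-Galois extensions from ψ : R → S to ψ' : R' → S', i.e. φ : S → S' is a G-equivariant ring homomorphism, φ̃ : R → R' is a ring homomorphism, and ψ' ∘ φ̃ = φ ∘ ψ. If η_e ∈ S ⊗_R S is the Galois element of ψ and η'_e ∈ S' ⊗_{R'} S' is the Galois element of ψ', then (φ ⊗ φ)(η_e) = η'_e. -/
open scoped TensorProduct

namespace Nuss
noncomputable section

variable {R S : Type*} [Ring R] [Ring S]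

/-- The subgroup of `S ⊗[ℤ] S` of relations defining the balanced product `S ⊗[R] S`,
where both `R`-module structures on `S` are induced by the ring homomorphism `ψ`. -/
def galRel (ψ : R →+* S) : AddSubgroup (TensorProduct ℤ S S) :=
  AddSubgroup.closure
    {x | ∃ (s t : S) (r : R), x = (s * ψ r) ⊗ₜ[ℤ] t - s ⊗ₜ[ℤ] (ψ r * t)}

/-- The balanced tensor product `S ⊗[R] S` along a ring homomorphism `ψ : R →+* S`
(`R` possibly noncommutative). -/
def Tensor (ψ : R →+* S) : Type _ := (TensorProduct ℤ S S) ⧸ galRel ψ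

instance (ψ : R →+* S) : AddCommGroup (Tensor ψ) :=
  QuotientAddGroup.Quotient.addCommGroup _

/-- The class of the pure tensor `s ⊗ t` in `S ⊗[R] S`. -/
def tmk (ψ : R →+* S) (s t : S) : Tensor ψ := QuotientAddGroup.mk (s ⊗ₜ[ℤ] t)

variable {G : Type*} [Group G]

/-- The biadditive map `(s, t) ↦ (g ↦ s ⬝ g(t))`. -/
def gammaBil (act : G →* RingAut S) : S →+ S →+ (G → S) :=
  AddMonoidHom.mk'
    (fun s => AddMonoidHom.mk' (fun t => fun g => s * act g t)
      (fun t t' => by funext g; simp [map_add, mul_add]))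
    (fun s s' => by ext t g; simp [add_mul])

/-- The Galois map on `S ⊗[ℤ] S`. -/
def gammaZ (act : G →* RingAut S) : TensorProduct ℤ S S →+ (G → S) :=
  TensorProduct.liftAddHom (gammaBil act) (fun z s t => by
    rw [map_zsmul, AddMonoidHom.smul_apply, map_zsmul])

@[simp] lemma gammaZ_tmul (act : G →* RingAut S) (s t : S) :
    gammaZ act (s ⊗ₜ[ℤ] t) = fun g => s * act g t := rfl

/-- The Galois map `Γ : S ⊗[R] S → Map(G, S)`, `Γ(s ⊗ t)(g) = s⬝g(t)`, for an action of `G`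
fixing `ψ(R)` pointwise. -/
def galoisMap (ψ : R →+* S) (act : G →* RingAut S)
    (hfix : ∀ (g : G) (r : R), act g (ψ r) = ψ r) :
    Tensor ψ →+ (G → S) :=
  QuotientAddGroup.lift (galRel ψ) (gammaZ act) (by
    intro x hx
    refine (AddSubgroup.closure_le ((gammaZ act).ker)).2 ?_ hx
    rintro y ⟨s, t, r, rfl⟩
    simp only [SetLike.mem_coe, AddMonoidHom.mem_ker, map_sub, gammaZ_tmul]
    funext g
    simp [map_mul, hfix, mul_assoc])

@[simp] lemma galoisMap_tmk (ψ : R →+* S) (act : G →* RingAut S)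
    (hfix : ∀ (g : G) (r : R), act g (ψ r) = ψ r) (s t : S) :
    galoisMap ψ act hfix (tmk ψ s t) = fun g => s * act g t := rfl

/-- A ring homomorphism `ψ : R →+* S` is faithfully flat if `S` is a faithfully flat left
`R`-module via `ψ`; this is rendered through the equational criterion for flatness together
with the condition `mS ≠ S` for every maximal left ideal `m` of `R`. -/
def IsFaithfullyFlatRingHom (ψ : R →+* S) : Prop :=
  (∀ (ι : Type) [Fintype ι] (r : ι → R) (s : ι → S),
    (∑ i, ψ (r i) * s i) = 0 →
    ∃ (κ : Type) (_ : Fintype κ) (a : ι → κ → R) (y : κ → S),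
      (∀ i, (∑ j, ψ (a i j) * y j) = s i) ∧ ∀ j, (∑ i, r i * a i j) = 0) ∧
  (∀ I : Ideal R, I.IsMaximal →
    AddSubgroup.closure {x : S | ∃ r ∈ I, ∃ s : S, x = ψ r * s} ≠ ⊤)

/-- The function `δ_e ∈ Map(G, S)`: `1` at the neutral element, `0` elsewhere. -/
def deltaE (G S : Type*) [Group G] [Ring S] : G → S :=
  fun g => letI := Classical.decEq G; if g = 1 then 1 else 0

/-- `ψ : R → S` is a `G`-Galois extension: `G` acts on `S` by ring automorphisms fixing `ψ(R)`
pointwise, `S` is faithfully flat as a left `R`-module via `ψ`, and the Galois map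
`Γ : S ⊗_R S → Map(G,S)` is bijective. -/
structure IsGaloisExtension (G : Type*) [Group G] [Finite G] {R S : Type*} [Ring R] [Ring S]
    (ψ : R →+* S) (act : G →* RingAut S) : Prop where
  fixes : ∀ (g : G) (r : R), act g (ψ r) = ψ r
  faithfullyFlat : IsFaithfullyFlatRingHom ψ
  bijective : Function.Bijective (galoisMap ψ act fixes)

end
end Nuss

namespace Nuss
noncomputable section

/-- The map `φ ⊗ φ : S ⊗[R] S → S' ⊗[R'] S'` induced by a compatible pair of ring
homomorphisms `(φS, φR)`. -/
def tensorCongr {R S R' S' : Type*} [Ring R] [Ring S] [Ring R'] [Ring S']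
    {ψ : R →+* S} {ψ' : R' →+* S'} (φS : S →+* S') (φR : R →+* R')
    (hcomp : ∀ r : R, ψ' (φR r) = φS (ψ r)) : Tensor ψ →+ Tensor ψ' :=
  QuotientAddGroup.lift (galRel ψ)
    ((QuotientAddGroup.mk' (galRel ψ')).comp
      (TensorProduct.map φS.toAddMonoidHom.toIntLinearMap
        φS.toAddMonoidHom.toIntLinearMap).toAddMonoidHom)
    (by
      intro x hx
      refine (AddSubgroup.closure_le _).2 ?_ hx
      rintro y ⟨s, t, r, rfl⟩
      have hmem : ((TensorProduct.map φS.toAddMonoidHom.toIntLinearMap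
          φS.toAddMonoidHom.toIntLinearMap)
            ((s * ψ r) ⊗ₜ[ℤ] t - s ⊗ₜ[ℤ] (ψ r * t))) ∈ galRel ψ' := by
        rw [map_sub, TensorProduct.map_tmul, TensorProduct.map_tmul]
        refine AddSubgroup.subset_closure ⟨φS s, φS t, φR r, ?_⟩
        simp [map_mul, hcomp]
      simp only [SetLike.mem_coe, AddMonoidHom.mem_ker, AddMonoidHom.comp_apply]
      exact (QuotientAddGroup.eq_zero_iff _).2 hmem)

@[simp] lemma tensorCongr_tmk {R S R' S' : Type*} [Ring R] [Ring S] [Ring R'] [Ring S']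
    {ψ : R →+* S} {ψ' : R' →+* S'} (φS : S →+* S') (φR : R →+* R')
    (hcomp : ∀ r : R, ψ' (φR r) = φS (ψ r)) (s t : S) :
    tensorCongr φS φR hcomp (tmk ψ s t) = tmk ψ' (φS s) (φS t) := rfl

section

variable {R S R' S' : Type*} [Ring R] [Ring S] [Ring R'] [Ring S'] {ψ : R →+* S} {ψ' : R' →+* S'}

@[ext]
lemma Tensor.addMonoidHom_ext {A : Type*} [AddMonoid A] {f g : Tensor ψ →+ A}
    (h : ∀ s t : S, f (tmk ψ s t) = g (tmk ψ s t)) : f = g := by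
  refine QuotientAddGroup.addMonoidHom_ext (galRel ψ) (AddMonoidHom.ext fun z => ?_)
  induction z using TensorProduct.induction_on with
  | zero => simp only [map_zero]
  | tmul s t => exact h s t
  | add x y hx hy => simp only [map_add, hx, hy]

lemma comp_deltaE (G : Type*) [Group G] {F : Type*} [FunLike F S S'] [ZeroHomClass F S S']
    [OneHomClass F S S'] (f : F) : f ∘ deltaE G S = deltaE G S' := by
  funext g
  simp only [Function.comp_apply, deltaE, apply_ite f, map_one, map_zero]

variable {G : Type*} [Group G] {act : G →* RingAut S} {act' : G →* RingAut S'}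

lemma galoisMap_tensorCongr (hfix : ∀ (g : G) (r : R), act g (ψ r) = ψ r)
    (hfix' : ∀ (g : G) (r : R'), act' g (ψ' r) = ψ' r) (φS : S →+* S') (φR : R →+* R')
    (hcomp : ∀ r : R, ψ' (φR r) = φS (ψ r))
    (hequiv : ∀ (g : G) (s : S), φS (act g s) = act' g (φS s)) (x : Tensor ψ) :
    galoisMap ψ' act' hfix' (tensorCongr φS φR hcomp x) = φS ∘ galoisMap ψ act hfix x := by
  suffices h : (galoisMap ψ' act' hfix').comp (tensorCongr φS φR hcomp) =
      (φS.toAddMonoidHom.compLeft G).comp (galoisMap ψ act hfix) from DFunLike.congr_fun h x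
  ext s t g
  calc φS s * act' g (φS t) = φS s * φS (act g t) := by rw [hequiv]
    _ = φS (s * act g t) := (map_mul φS _ _).symm

theorem galoisElement_map_general (hfix : ∀ (g : G) (r : R), act g (ψ r) = ψ r)
    (hfix' : ∀ (g : G) (r : R'), act' g (ψ' r) = ψ' r)
    (hinj : Function.Injective (galoisMap ψ' act' hfix')) (φS : S →+* S') (φR : R →+* R')
    (hcomp : ∀ r : R, ψ' (φR r) = φS (ψ r))
    (hequiv : ∀ (g : G) (s : S), φS (act g s) = act' g (φS s))
    {η : Tensor ψ} {η' : Tensor ψ'} (hη : galoisMap ψ act hfix η = deltaE G S)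
    (hη' : galoisMap ψ' act' hfix' η' = deltaE G S') :
    tensorCongr φS φR hcomp η = η' := by
  apply hinj
  calc galoisMap ψ' act' hfix' (tensorCongr φS φR hcomp η)
      = φS ∘ galoisMap ψ act hfix η := galoisMap_tensorCongr hfix hfix' φS φR hcomp hequiv η
    _ = φS ∘ deltaE G S := by rw [hη]
    _ = deltaE G S' := comp_deltaE G φS
    _ = galoisMap ψ' act' hfix' η' := hη'.symm

end

/-- Let `(φS, φR)` be a morphism of `G`-Galois extensions from `ψ : R → S`
to `ψ' : R' → S'`. If `η_e` is the Galois element of `ψ` and `η'_e` that of `ψ'`, then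
`(φ ⊗ φ)(η_e) = η'_e`. -/
theorem galoisElement_map
    {R S R' S' : Type*} [Ring R] [Ring S] [Ring R'] [Ring S']
    {G : Type*} [Group G] [Finite G]
    (ψ : R →+* S) (ψ' : R' →+* S')
    (act : G →* RingAut S) (act' : G →* RingAut S')
    (hGal : IsGaloisExtension G ψ act) (hGal' : IsGaloisExtension G ψ' act')
    (φS : S →+* S') (φR : R →+* R')
    (hcomp : ∀ r : R, ψ' (φR r) = φS (ψ r))
    (hequiv : ∀ (g : G) (s : S), φS (act g s) = act' g (φS s))
    (η : Tensor ψ) (η' : Tensor ψ')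
    (hη : galoisMap ψ act hGal.fixes η = deltaE G S)
    (hη' : galoisMap ψ' act' hGal'.fixes η' = deltaE G S') :
    tensorCongr φS φR hcomp η = η' :=
  galoisElement_map_general hGal.fixes hGal'.fixes hGal'.bijective.injective φS φR hcomp hequiv
    hη hη'

end
end Nuss
end

section
/- Let G be a finite group and ψ : R → S a centralizing G-Galois extension with Galois element η_e = Σ_{i=1}^m xᵢ ⊗ yᵢ. In the ring S ⊗_R S ⊗_R S, set X₁₂ = Σᵢ xᵢ ⊗ yᵢ ⊗ 1, X₂₃ = Σᵢ 1 ⊗ xᵢ ⊗ yᵢ, and X₁₃ = Σᵢ xᵢ ⊗ 1 ⊗ yᵢ. Then the Galois element satisfies the Frobenius-separability equation X₁₂X₂₃ = X₂₃X₁₃ = X₁₃X₁₂, and consequently the Yang–Baxter equation X₁₂X₂₃X₁₂ = X₂₃X₁₂X₂₃. -/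
/-!
Applying `Γ` to `(s ⊗ 1) η_e` and to `η_e (1 ⊗ s)` gives `s δ_e(g)` and `δ_e(g) g(s)`. These agree
because `δ_e` is supported at the neutral element, so injectivity of `Γ` makes `η_e` a Casimir
element: `(s ⊗ 1) η_e = η_e (1 ⊗ s)` for all `s`. For a Casimir element `η`, applying this relation
in the last two, respectively the first two, tensor factors carries a second copy of `η` past the
first and gives `X₁₂X₂₃ = X₂₃X₁₃`, respectively `X₁₃X₁₂ = X₁₂X₂₃`. Then
`X₁₂X₂₃X₁₂ = X₂₃X₁₃X₁₂ = X₂₃X₁₂X₂₃`.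
-/

open scoped TensorProduct

namespace Nuss
noncomputable section

variable {R : Type*} [CommRing R] {S : Type*} [Ring S] [Algebra R S]
variable {G : Type*} [Group G]

/-- The Galois map `Γ : S ⊗[R] S →ₗ[R] Map(G,S)`, `Γ(s ⊗ t)(g) = s⬝g(t)`, for a centralizing
extension, i.e. an `R`-algebra `S`, with `G` acting by `R`-algebra automorphisms. -/
def gammaAlg (act : G →* (S ≃ₐ[R] S)) : S ⊗[R] S →ₗ[R] (G → S) :=
  TensorProduct.lift <| LinearMap.mk₂ R (fun s t => fun g => s * act g t)
    (fun s s' t => by funext g; simp [add_mul])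
    (fun c s t => by funext g; simp [Algebra.smul_mul_assoc])
    (fun s t t' => by funext g; simp [map_add, mul_add])
    (fun c s t => by funext g; simp [map_smul, Algebra.mul_smul_comm])

@[simp] lemma gammaAlg_tmul (act : G →* (S ≃ₐ[R] S)) (s t : S) :
    gammaAlg act (s ⊗ₜ[R] t) = fun g => s * act g t := rfl

/-- The function `δ_e ∈ Map(G, S)`: `1` at the neutral element, `0` elsewhere. -/
def deltaE' (G S : Type*) [Group G] [Ring S] : G → S :=
  fun g => letI := Classical.decEq G; if g = 1 then 1 else 0

/-- A centralizing `G`-Galois extension: `S` is an `R`-algebra (so that the structure morphism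
`ψ = algebraMap R S` lands in the centre of `S`), the finite group `G` acts on `S` by
`R`-algebra automorphisms (equivalently, by ring automorphisms fixing `ψ(R)` pointwise),
`S` is a faithfully flat `R`-module via `ψ`, and the Galois map is bijective. -/
structure IsCentralizingGaloisExtension (G : Type*) [Group G] [Finite G]
    (R S : Type*) [CommRing R] [Ring S] [Algebra R S] (act : G →* (S ≃ₐ[R] S)) : Prop where
  faithfullyFlat : Module.FaithfullyFlat R S
  bijective : Function.Bijective (gammaAlg act)

/-- A central extension: the structure morphism maps `R` bijectively onto the centre of `S`. -/
def IsCentralExtension (R S : Type*) [CommRing R] [Ring S] [Algebra R S] : Prop :=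
  Function.Injective (algebraMap R S) ∧ (algebraMap R S).range = Subring.center S

/-- A separable extension: the multiplication `μ : S ⊗[R] S → S` splits as a morphism of
`S`-bimodules; equivalently there is a Casimir element `η` with `μ(η) = 1`. -/
def IsSeparableExtension (R S : Type*) [CommRing R] [Ring S] [Algebra R S] : Prop :=
  ∃ η : S ⊗[R] S, (∀ s : S, (s ⊗ₜ[R] (1 : S)) * η = η * ((1 : S) ⊗ₜ[R] s)) ∧
    LinearMap.mul' R S η = 1

/-- A `G`-Galois-Azumaya extension: a central `G`-Galois extension `R → S` such that `S` is
an Azumaya (central separable) `R`-algebra. -/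
def IsGaloisAzumayaExtension (G : Type*) [Group G] [Finite G]
    (R S : Type*) [CommRing R] [Ring S] [Algebra R S] (act : G →* (S ≃ₐ[R] S)) : Prop :=
  IsCentralizingGaloisExtension G R S act ∧ IsCentralExtension R S ∧ IsSeparableExtension R S

end
end Nuss

namespace Nuss
noncomputable section

section Casimir

variable {R S : Type*} [CommSemiring R] [Semiring S] [Algebra R S]

/-- Casimir elements: the elements of `S ⊗[R] S` central for the `S`-bimodule structure
`a · (s ⊗ t) · b = a s ⊗ t b`, which is encoded by multiplication in the ring `S ⊗[R] S`. -/
def IsCasimir (η : S ⊗[R] S) : Prop :=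
  ∀ s : S, (s ⊗ₜ[R] (1 : S)) * η = η * ((1 : S) ⊗ₜ[R] s)

/-- The embedding `η ↦ η₁₂` of `S ⊗ S` into the first two factors of `S ⊗ S ⊗ S`. -/
def leg12 : S ⊗[R] S →ₐ[R] (S ⊗[R] S) ⊗[R] S :=
  Algebra.TensorProduct.includeLeft

/-- The embedding `η ↦ η₂₃` of `S ⊗ S` into the last two factors of `S ⊗ S ⊗ S`. It passes through
`S ⊗ (S ⊗ S)`, so that `η₂₃` is literally the reassociation of `1 ⊗ η`. -/
def leg23 : S ⊗[R] S →ₐ[R] (S ⊗[R] S) ⊗[R] S :=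
  (Algebra.TensorProduct.assoc R R R S S S).symm.toAlgHom.comp Algebra.TensorProduct.includeRight

/-- The embedding `η ↦ η₁₃` of `S ⊗ S` into the outer two factors of `S ⊗ S ⊗ S`. -/
def leg13 : S ⊗[R] S →ₐ[R] (S ⊗[R] S) ⊗[R] S :=
  Algebra.TensorProduct.map Algebra.TensorProduct.includeLeft (AlgHom.id R S)

@[simp] lemma leg12_apply (η : S ⊗[R] S) : leg12 η = η ⊗ₜ[R] (1 : S) := rfl

lemma leg23_apply (η : S ⊗[R] S) :
    leg23 η = (Algebra.TensorProduct.assoc R R R S S S).symm ((1 : S) ⊗ₜ[R] η) := rfl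

@[simp] lemma leg23_tmul (s t : S) :
    leg23 (s ⊗ₜ[R] t) = ((1 : S) ⊗ₜ[R] s) ⊗ₜ[R] t := rfl

@[simp] lemma leg13_tmul (s t : S) :
    leg13 (s ⊗ₜ[R] t) = (s ⊗ₜ[R] (1 : S)) ⊗ₜ[R] t := rfl

namespace IsCasimir

variable {η : S ⊗[R] S}

lemma leg12_mul_leg23 (hη : IsCasimir η) (ζ : S ⊗[R] S) :
    leg12 ζ * leg23 η = leg23 η * leg13 ζ := by
  induction ζ with
  | zero => simp only [map_zero, zero_mul, mul_zero]
  | add ζ₁ ζ₂ h₁ h₂ => simp only [map_add, add_mul, mul_add, h₁, h₂]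
  | tmul s t =>
    have leg12_eq : leg12 (s ⊗ₜ[R] t) =
        (Algebra.TensorProduct.assoc R R R S S S).symm (s ⊗ₜ[R] (t ⊗ₜ[R] (1 : S))) := rfl
    have leg13_eq : leg13 (s ⊗ₜ[R] t) =
        (Algebra.TensorProduct.assoc R R R S S S).symm (s ⊗ₜ[R] ((1 : S) ⊗ₜ[R] t)) := rfl
    rw [leg12_eq, leg13_eq, leg23_apply, ← map_mul, ← map_mul]
    simp only [Algebra.TensorProduct.tmul_mul_tmul, hη t, mul_one, one_mul]

lemma leg13_mul_leg12 (hη : IsCasimir η) (ζ : S ⊗[R] S) :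
    leg13 ζ * leg12 η = leg12 η * leg23 ζ := by
  induction ζ with
  | zero => simp only [map_zero, zero_mul, mul_zero]
  | add ζ₁ ζ₂ h₁ h₂ => simp only [map_add, add_mul, mul_add, h₁, h₂]
  | tmul s t =>
    simp only [leg12_apply, leg13_tmul, leg23_tmul, Algebra.TensorProduct.tmul_mul_tmul, hη s,
      mul_one, one_mul]

lemma yangBaxter (hη : IsCasimir η) :
    leg12 η * leg23 η * leg12 η = leg23 η * leg12 η * leg23 η :=
  calc leg12 η * leg23 η * leg12 η
      = leg23 η * (leg13 η * leg12 η) := by rw [hη.leg12_mul_leg23, mul_assoc]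
    _ = leg23 η * leg12 η * leg23 η := by rw [hη.leg13_mul_leg12, mul_assoc]

end IsCasimir

end Casimir

section GaloisMap

variable {R S G : Type*} [CommRing R] [Ring S] [Algebra R S] [Group G]

lemma gammaAlg_tmul_one_mul (act : G →* (S ≃ₐ[R] S)) (s : S) (η : S ⊗[R] S) (g : G) :
    gammaAlg act ((s ⊗ₜ[R] (1 : S)) * η) g = s * gammaAlg act η g := by
  induction η with
  | zero => simp only [mul_zero, map_zero, Pi.zero_apply]
  | add η₁ η₂ h₁ h₂ => simp only [mul_add, map_add, Pi.add_apply, h₁, h₂]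
  | tmul a b =>
    simp only [Algebra.TensorProduct.tmul_mul_tmul, gammaAlg_tmul, one_mul, mul_assoc]

lemma gammaAlg_mul_one_tmul (act : G →* (S ≃ₐ[R] S)) (η : S ⊗[R] S) (s : S) (g : G) :
    gammaAlg act (η * ((1 : S) ⊗ₜ[R] s)) g = gammaAlg act η g * act g s := by
  induction η with
  | zero => simp only [zero_mul, map_zero, Pi.zero_apply]
  | add η₁ η₂ h₁ h₂ => simp only [add_mul, map_add, Pi.add_apply, h₁, h₂]
  | tmul a b =>
    simp only [Algebra.TensorProduct.tmul_mul_tmul, gammaAlg_tmul, mul_one, map_mul, mul_assoc]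

lemma mul_deltaE' (act : G →* (S ≃ₐ[R] S)) (s : S) (g : G) :
    s * deltaE' G S g = deltaE' G S g * act g s := by
  by_cases hg : g = 1 <;> simp [deltaE', hg]

lemma isCasimir_of_gammaAlg_eq_deltaE' {act : G →* (S ≃ₐ[R] S)}
    (hinj : Function.Injective (gammaAlg act)) {η : S ⊗[R] S}
    (hη : gammaAlg act η = deltaE' G S) : IsCasimir η := by
  refine fun s => hinj (funext fun g => ?_)
  rw [gammaAlg_tmul_one_mul, gammaAlg_mul_one_tmul, hη, mul_deltaE' act]

theorem galoisElement_frobenius_separability_general {act : G →* (S ≃ₐ[R] S)}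
    (hinj : Function.Injective (gammaAlg act)) {η : S ⊗[R] S}
    (hη : gammaAlg act η = deltaE' G S) :
    leg12 η * leg23 η = leg23 η * leg13 η ∧ leg23 η * leg13 η = leg13 η * leg12 η ∧
      leg12 η * leg23 η * leg12 η = leg23 η * leg12 η * leg23 η := by
  have hcas : IsCasimir η := isCasimir_of_gammaAlg_eq_deltaE' hinj hη
  have h₁ := hcas.leg12_mul_leg23 η
  have h₂ := hcas.leg13_mul_leg12 η
  exact ⟨h₁, (h₂.trans h₁).symm, hcas.yangBaxter⟩

end GaloisMap

/-- For a centralizing `G`-Galois extension `ψ : R → S` with Galois element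
`η_e = Σ xᵢ ⊗ yᵢ`, the elements `X₁₂, X₂₃, X₁₃` of `S ⊗_R S ⊗_R S` satisfy the
Frobenius-separability equation `X₁₂X₂₃ = X₂₃X₁₃ = X₁₃X₁₂`, and consequently the
Yang–Baxter equation `X₁₂X₂₃X₁₂ = X₂₃X₁₂X₂₃`. -/
theorem galoisElement_frobenius_separability
    {R : Type*} [CommRing R] {S : Type*} [Ring S] [Algebra R S]
    {G : Type*} [Group G] [Finite G]
    (act : G →* (S ≃ₐ[R] S))
    (hGal : IsCentralizingGaloisExtension G R S act)
    {m : ℕ} (x y : Fin m → S)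
    (hbasis : gammaAlg act (∑ i, (x i) ⊗ₜ[R] (y i)) = deltaE' G S)
    (X12 X23 X13 : (S ⊗[R] S) ⊗[R] S)
    (hX12 : X12 = ∑ i, ((x i) ⊗ₜ[R] (y i)) ⊗ₜ[R] (1 : S))
    (hX23 : X23 = ∑ i, ((1 : S) ⊗ₜ[R] (x i)) ⊗ₜ[R] (y i))
    (hX13 : X13 = ∑ i, ((x i) ⊗ₜ[R] (1 : S)) ⊗ₜ[R] (y i)) :
    X12 * X23 = X23 * X13 ∧ X23 * X13 = X13 * X12 ∧
      X12 * X23 * X12 = X23 * X12 * X23 := by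
  subst hX12 hX23 hX13
  simpa only [map_sum, leg12_apply, leg23_tmul, leg13_tmul, TensorProduct.sum_tmul] using
    galoisElement_frobenius_separability_general hGal.bijective.injective hbasis

end
end Nuss
end

section
/- Let F be a field of characteristic different from 2, let a, b ∈ F be nonzero, and let H = (a,b/F) be the quaternion algebra over F with basis 1, i, j, k and relations i² = a, j² = b, ij = −ji = k. Then the element η = (1/4)(1 ⊗ 1 + a⁻¹·(i ⊗ i) + b⁻¹·(j ⊗ j) − (ab)⁻¹·(k ⊗ k)) of the F-algebra H ⊗_F H satisfies η² = (1/4)(1 ⊗ 1); equivalently, (2η)² = 1 ⊗ 1, so left multiplication by 2η on H ⊗_F H is an involution. -/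
open scoped TensorProduct Quaternion

/-! Put `x = a⁻¹ (i ⊗ i)` and `y = b⁻¹ (j ⊗ j)`. Both square to `1`, and they commute because the
sign in `ji = -ij` appears once in each tensor factor. Moreover `xy = (ab)⁻¹ (k ⊗ k)`, so
`4η = 1 + x + y - xy = (1 + x) + (1 - x)y`; since `(1 + x)(1 - x) = 0` and `y² = 1`, its square is
`(1 + x)² + (1 - x)² = 4`. -/

theorem one_add_add_sub_mul_mul_self {A : Type*} [Ring A] {x y : A}
    (hx : x * x = 1) (hy : y * y = 1) (hxy : Commute x y) :
    (1 + x + y - x * y) * (1 + x + y - x * y) = 4 := by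
  have factor : 1 + x + y - x * y = (1 + x) + (1 - x) * y := by noncomm_ring
  have plus_mul_minus : (1 + x) * (1 - x) = 0 := by
    linear_combination (norm := noncomm_ring) -hx
  have minus_mul_plus : (1 - x) * (1 + x) = 0 := by
    linear_combination (norm := noncomm_ring) -hx
  have comm_plus : Commute y (1 + x) := (Commute.one_right y).add_right hxy.symm
  have comm_minus : Commute y (1 - x) := (Commute.one_right y).sub_right hxy.symm
  calc
    (1 + x + y - x * y) * (1 + x + y - x * y)
        = (1 + x) * (1 + x) + (1 + x) * (1 - x) * y
          + (1 - x) * y * (1 + x) + (1 - x) * y * ((1 - x) * y) := by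
      rw [factor]; noncomm_ring
    _ = (1 + x) * (1 + x) + (1 + x) * (1 - x) * y
          + (1 - x) * (1 + x) * y + (1 - x) * (1 - x) * (y * y) := by
      rw [comm_plus.right_comm, comm_minus.mul_mul_mul_comm]
    _ = (1 + x) * (1 + x) + (1 - x) * (1 - x) := by
      rw [plus_mul_minus, minus_mul_plus, hy, zero_mul, add_zero, add_zero, mul_one]
    _ = 2 + 2 * (x * x) := by grind
    _ = 4 := by rw [hx]; norm_num

section TensorProduct

variable {R A B : Type*} [CommRing R] [Ring A] [Ring B] [Algebra R A] [Algebra R B]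

theorem smul_tmul_mul_self_eq_one {x : A} {x' : B} {c c' r : R}
    (hx : x * x = c • 1) (hx' : x' * x' = c' • 1) (hr : r * r * (c * c') = 1) :
    (r • (x ⊗ₜ[R] x')) * (r • (x ⊗ₜ[R] x')) = 1 := by
  rw [smul_mul_smul_comm, Algebra.TensorProduct.tmul_mul_tmul, hx, hx',
    TensorProduct.smul_tmul_smul, smul_smul, hr, one_smul, Algebra.TensorProduct.one_def]

theorem commute_tmul_of_mul_eq_neg {x y : A} {x' y' : B}
    (h : x * y = -(y * x)) (h' : x' * y' = -(y' * x')) :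
    Commute (x ⊗ₜ[R] x') (y ⊗ₜ[R] y') := by
  rw [commute_iff_eq, Algebra.TensorProduct.tmul_mul_tmul, Algebra.TensorProduct.tmul_mul_tmul,
    h, h', TensorProduct.neg_tmul, TensorProduct.tmul_neg, neg_neg]

theorem quaternion_galoisElement_sq_general {a b a' b' r s t : R}
    (p : QuaternionAlgebra.Basis A a 0 b) (q : QuaternionAlgebra.Basis B a' 0 b')
    (hr : r * r * (a * a') = 1) (hs : s * s * (b * b') = 1) (ht : t * 4 = 1)
    (η : A ⊗[R] B)
    (hη : η = t • ((1 : A) ⊗ₜ[R] (1 : B) + r • (p.i ⊗ₜ[R] q.i) + s • (p.j ⊗ₜ[R] q.j)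
      - (r * s) • (p.k ⊗ₜ[R] q.k))) :
    η * η = t • ((1 : A) ⊗ₜ[R] (1 : B)) ∧
    ((2 : R) • η) * ((2 : R) • η) = 1 ∧
    (∀ ξ : A ⊗[R] B, ((2 : R) • η) * (((2 : R) • η) * ξ) = ξ) := by
  set x := r • (p.i ⊗ₜ[R] q.i) with x_def
  set y := s • (p.j ⊗ₜ[R] q.j) with y_def
  have hx : x * x = 1 := smul_tmul_mul_self_eq_one (by simp) (by simp) hr
  have hy : y * y = 1 := smul_tmul_mul_self_eq_one p.j_mul_j q.j_mul_j hs
  have hxy : Commute x y :=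
    ((commute_tmul_of_mul_eq_neg (by simp) (by simp)).smul_left r).smul_right s
  have x_mul_y : x * y = (r * s) • (p.k ⊗ₜ[R] q.k) := by
    rw [x_def, y_def, smul_mul_smul_comm, Algebra.TensorProduct.tmul_mul_tmul,
      p.i_mul_j, q.i_mul_j]
  have four_eq : (4 : A ⊗[R] B) = (4 : R) • 1 := by
    rw [← Algebra.algebraMap_eq_smul_one, map_ofNat]
  rw [← x_mul_y] at hη
  rw [← Algebra.TensorProduct.one_def] at hη ⊢
  have η_sq : η * η = t • 1 := by
    rw [hη, smul_mul_smul_comm, one_add_add_sub_mul_mul_self hx hy hxy, four_eq, smul_smul,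
      mul_assoc, ht, mul_one]
  have two_η_sq : ((2 : R) • η) * ((2 : R) • η) = 1 := by
    rw [smul_mul_smul_comm, η_sq, smul_smul, show (2 : R) * 2 * t = 1 by linear_combination ht,
      one_smul]
  exact ⟨η_sq, two_η_sq, fun ξ => by rw [← mul_assoc, two_η_sq, one_mul]⟩

end TensorProduct

/-- Let `F` be a field of characteristic different from `2`, `a b ∈ F`
nonzero, and `H = (a,b/F)` the quaternion algebra (with `i² = a`, `j² = b`,
`ij = -ji = k`).  The element
`η = (1/4)(1 ⊗ 1 + a⁻¹ (i ⊗ i) + b⁻¹ (j ⊗ j) − (ab)⁻¹ (k ⊗ k))` of `H ⊗_F H` satisfies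
`η² = (1/4)(1 ⊗ 1)`; equivalently `(2η)² = 1 ⊗ 1`, so left multiplication by `2η` on
`H ⊗_F H` is an involution. -/
theorem quaternion_galoisElement_sq
    (F : Type*) [Field F] (hchar : (2 : F) ≠ 0)
    (a b : F) (ha : a ≠ 0) (hb : b ≠ 0)
    (η : ℍ[F, a, b] ⊗[F] ℍ[F, a, b])
    (hη : η = (4 : F)⁻¹ •
      ((1 : ℍ[F, a, b]) ⊗ₜ[F] (1 : ℍ[F, a, b])
        + a⁻¹ • ((⟨0, 1, 0, 0⟩ : ℍ[F, a, b]) ⊗ₜ[F] (⟨0, 1, 0, 0⟩ : ℍ[F, a, b]))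
        + b⁻¹ • ((⟨0, 0, 1, 0⟩ : ℍ[F, a, b]) ⊗ₜ[F] (⟨0, 0, 1, 0⟩ : ℍ[F, a, b]))
        - (a * b)⁻¹ • ((⟨0, 0, 0, 1⟩ : ℍ[F, a, b]) ⊗ₜ[F] (⟨0, 0, 0, 1⟩ : ℍ[F, a, b])))) :
    η * η = (4 : F)⁻¹ • ((1 : ℍ[F, a, b]) ⊗ₜ[F] (1 : ℍ[F, a, b])) ∧
    ((2 : F) • η) * ((2 : F) • η) = 1 ∧
    (∀ ξ : ℍ[F, a, b] ⊗[F] ℍ[F, a, b], ((2 : F) • η) * (((2 : F) • η) * ξ) = ξ) := by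
  have four_ne_zero : (4 : F) ≠ 0 := by
    simpa [show (4 : F) = 2 * 2 by norm_num] using hchar
  rw [mul_inv] at hη
  exact quaternion_galoisElement_sq_general (.self F) (.self F) (by field_simp) (by field_simp)
    (inv_mul_cancel₀ four_ne_zero) η hη
end

section
/- Let R be a commutative ring, G a finite group, ψ : R → S a centralizing G-Galois extension, and ϱ : R → T a homomorphism of commutative rings. Then the base-changed extension ψ_T : T → T ⊗_R S, t ↦ t ⊗ 1, with G acting on T ⊗_R S by g·(t ⊗ s) = t ⊗ g(s), is a centralizing G-Galois extension; likewise the extension _Tψ : T → S ⊗_R T, t ↦ 1 ⊗ t, with G acting by g·(s ⊗ t) = g(s) ⊗ t, is a centralizing G-Galois extension. If moreover ψ is a G-Galois-Azumaya extension, then so are ψ_T and _Tψ. -/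
open scoped TensorProduct

namespace Nuss
noncomputable section

/-! Tensor squares and finite powers of modules commute with base change, and under these
identifications the Galois map of the base change is the base change of the Galois map; hence it
stays bijective.

A Casimir element `η = ∑ aᵢ ⊗ bᵢ` with `∑ aᵢ bᵢ = 1` is carried to such an element by base change,
so separability survives. Centrality is less obvious, as the formation of the centre does not
commute with base change in general. But `x ↦ ∑ aᵢ x bᵢ` is a projection of `S` onto its centre, so
for separable `S` centrality says that this projection factors through an `R`-linear retraction of
`R → S`, a condition visibly stable under base change.
-/

open Algebra.TensorProduct (includeLeft includeRight)

section CasimirElements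

variable {R : Type*} [CommRing R] {S : Type*} [Ring S] [Algebra R S]

/-- A Casimir element of an algebra `S`: an element of `S ⊗[R] S` whose left and right
multiplications by elements of `S` agree. The separability idempotents are those of them that
multiply to `1`. -/
def IsCasimirElement (η : S ⊗[R] S) : Prop :=
  ∀ s : S, (s ⊗ₜ[R] (1 : S)) * η = η * ((1 : S) ⊗ₜ[R] s)

/-- The action of `S ⊗[R] S` on `S` in which `a ⊗ₜ b` sends `x` to `a * x * b`. For a Casimir
element it plays the role of averaging over a group. It is not multiplicative, because the second
factor is `S` rather than its opposite. -/
def sandwich (R S : Type*) [CommRing R] [Ring S] [Algebra R S] :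
    S ⊗[R] S →ₗ[R] Module.End R S :=
  (AlgHom.mulLeftRight R S).toLinearMap ∘ₗ
    TensorProduct.map .id (MulOpposite.opLinearEquiv R).toLinearMap

@[simp]
lemma sandwich_tmul (a b x : S) : sandwich R S (a ⊗ₜ b) x = a * x * b := by
  simp [sandwich]

lemma sandwich_tmul_one_mul (s : S) (η : S ⊗[R] S) (x : S) :
    sandwich R S ((s ⊗ₜ 1) * η) x = s * sandwich R S η x := by
  induction η with
  | zero => simp
  | tmul a b => simp [mul_assoc]
  | add η θ hη hθ => simp [mul_add, hη, hθ]

lemma sandwich_mul_one_tmul (η : S ⊗[R] S) (s x : S) :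
    sandwich R S (η * (1 ⊗ₜ s)) x = sandwich R S η x * s := by
  induction η with
  | zero => simp
  | tmul a b => simp [mul_assoc]
  | add η θ hη hθ => simp [add_mul, hη, hθ]

lemma sandwich_apply_of_mem_center (η : S ⊗[R] S) {z : S} (hz : z ∈ Subring.center S) :
    sandwich R S η z = z * LinearMap.mul' R S η := by
  induction η with
  | zero => simp
  | tmul a b => simp [Subring.mem_center_iff.mp hz a, mul_assoc]
  | add η θ hη hθ => simp [mul_add, hη, hθ]

lemma IsCasimirElement.sandwich_mem_center {η : S ⊗[R] S} (hη : IsCasimirElement η) (x : S) :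
    sandwich R S η x ∈ Subring.center S :=
  Subring.mem_center_iff.mpr fun s => by
    rw [← sandwich_tmul_one_mul, hη s, sandwich_mul_one_tmul]

theorem IsCasimirElement.isCentralExtension_iff {η : S ⊗[R] S} (hη : IsCasimirElement η)
    (hη_one : LinearMap.mul' R S η = 1) :
    IsCentralExtension R S ↔
      ∃ p : S →ₗ[R] R, p 1 = 1 ∧ Algebra.linearMap R S ∘ₗ p = sandwich R S η := by
  have sandwich_center {z : S} (hz : z ∈ Subring.center S) : sandwich R S η z = z := by
    rw [sandwich_apply_of_mem_center η hz, hη_one, mul_one]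
  constructor
  · rintro ⟨hinj, hrange⟩
    have sandwich_mem_range (x : S) : sandwich R S η x ∈ (Algebra.linearMap R S).range :=
      hrange.ge (hη.sandwich_mem_center x)
    let p : S →ₗ[R] R := (LinearEquiv.ofInjective (Algebra.linearMap R S) hinj).symm ∘ₗ
      (sandwich R S η).codRestrict _ sandwich_mem_range
    have algebraMap_p (x : S) : algebraMap R S (p x) = sandwich R S η x :=
      congrArg Subtype.val ((LinearEquiv.ofInjective (Algebra.linearMap R S) hinj).apply_symm_apply
        ⟨_, sandwich_mem_range x⟩)
    refine ⟨p, hinj ?_, LinearMap.ext algebraMap_p⟩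
    rw [algebraMap_p, sandwich_center (one_mem _), map_one]
  · rintro ⟨p, hp_one, hp⟩
    have p_algebraMap (r : R) : p (algebraMap R S r) = r := by
      rw [Algebra.algebraMap_eq_smul_one, map_smul, hp_one, smul_eq_mul, mul_one]
    refine ⟨Function.LeftInverse.injective p_algebraMap, le_antisymm ?_ fun z hz => ⟨p z, ?_⟩⟩
    · rintro _ ⟨r, rfl⟩
      exact Set.algebraMap_mem_center r
    · exact (LinearMap.congr_fun hp z).trans (sandwich_center hz)

end CasimirElements

section ModuleBaseChange

variable {R T : Type*} [CommSemiring R] [CommSemiring T] [Algebra R T]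
variable {M N : Type*} [AddCommMonoid M] [Module R M] [AddCommMonoid N] [Module R N]
variable {M' : Type*} [AddCommMonoid M'] [Module R M'] [Module T M'] [IsScalarTower R T M']
variable {N' : Type*} [AddCommMonoid N'] [Module R N'] [Module T N'] [IsScalarTower R T N']

lemma bijective_of_isBaseChange {f : M →ₗ[R] M'} {g : N →ₗ[R] N'} (hf : IsBaseChange T f)
    (hg : IsBaseChange T g) {e : M →ₗ[R] N} (he : Function.Bijective e) (e' : M' →ₗ[T] N')
    (comm : ∀ m, e' (f m) = g (e m)) : Function.Bijective e' := by
  have hge := hg.comp_equiv (LinearEquiv.ofBijective e he) g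
  have he' : e' = (hf.equiv.symm ≪≫ₗ hge.equiv).toLinearMap :=
    hf.algHom_ext _ _ fun m => by simp [comm, hge.equiv_tmul]
  rw [he']
  exact LinearEquiv.bijective _

lemma isBaseChange_tensorProductMap {f : M →ₗ[R] M'} {g : N →ₗ[R] N'} (hf : IsBaseChange T f)
    (hg : IsBaseChange T g) :
    IsBaseChange T (TensorProduct.mapOfCompatibleSMul T R R M' N' ∘ₗ TensorProduct.map f g) := by
  let e : T ⊗[R] (M ⊗[R] N) ≃ₗ[T] M' ⊗[T] N' :=
    TensorProduct.AlgebraTensorModule.distribBaseChange R T M N ≪≫ₗ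
      TensorProduct.congr hf.equiv hg.equiv
  refine .of_equiv e fun x => ?_
  induction x with
  | zero => simp
  | tmul m n => simp [e, IsBaseChange.equiv_tmul]
  | add x y hx hy => simp [TensorProduct.tmul_add, hx, hy]

lemma span_range_eq_top_of_isBaseChange {f : M →ₗ[R] M'} (hf : IsBaseChange T f) :
    Submodule.span T (Set.range f) = ⊤ := by
  refine Submodule.eq_top_iff'.mpr fun x => ?_
  induction x using hf.inductionOn with
  | zero => exact zero_mem _
  | tmul m => exact Submodule.subset_span ⟨m, rfl⟩
  | smul t x hx => exact Submodule.smul_mem _ t hx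
  | add x y hx hy => exact add_mem hx hy

lemma isBaseChange_includeLeft (R S T : Type*) [CommRing R] [Ring S] [Algebra R S] [CommRing T]
    [Algebra R T] :
    letI : Algebra T (S ⊗[R] T) := Algebra.TensorProduct.rightAlgebra
    IsBaseChange T (includeLeft : S →ₐ[R] S ⊗[R] T).toLinearMap :=
  letI : Algebra T (S ⊗[R] T) := Algebra.TensorProduct.rightAlgebra
  .of_equiv (Algebra.TensorProduct.commRight R T S).toLinearEquiv fun _ => rfl

end ModuleBaseChange

section BaseChange

variable {R T : Type*} [CommRing R] [CommRing T] [Algebra R T]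
variable {S : Type*} [Ring S] [Algebra R S]
variable {S' : Type*} [Ring S'] [Algebra R S'] [Algebra T S'] [IsScalarTower R T S']
variable {G : Type*} [Group G]

/-- The homomorphism `S ⊗[R] S → S' ⊗[T] S'` induced on tensor squares by `f : S → S'`, where the
ground ring changes from `R` to `T`. -/
def tensorSquareMap (T : Type*) [CommRing T] [Algebra R T] [Algebra T S'] [IsScalarTower R T S']
    (f : S →ₐ[R] S') : S ⊗[R] S →ₐ[R] S' ⊗[T] S' :=
  (Algebra.TensorProduct.mapOfCompatibleSMul T R R S' S').comp (Algebra.TensorProduct.map f f)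

@[simp]
lemma tensorSquareMap_tmul (f : S →ₐ[R] S') (a b : S) :
    tensorSquareMap T f (a ⊗ₜ b) = f a ⊗ₜ[T] f b := rfl

lemma mul'_tensorSquareMap (f : S →ₐ[R] S') (η : S ⊗[R] S) :
    LinearMap.mul' T S' (tensorSquareMap T f η) = f (LinearMap.mul' R S η) := by
  induction η with
  | zero => simp
  | tmul a b => simp
  | add η θ hη hθ => simp [hη, hθ]

lemma sandwich_tensorSquareMap (f : S →ₐ[R] S') (η : S ⊗[R] S) (s : S) :
    sandwich T S' (tensorSquareMap T f η) (f s) = f (sandwich R S η s) := by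
  induction η with
  | zero => simp
  | tmul a b => simp
  | add η θ hη hθ => simp [hη, hθ]

lemma IsCasimirElement.map {η : S ⊗[R] S} (hη : IsCasimirElement η) {f : S →ₐ[R] S'}
    (hf : Submodule.span T (Set.range f) = ⊤) : IsCasimirElement (tensorSquareMap T f η) := by
  intro x
  induction hf.ge (Submodule.mem_top : x ∈ ⊤) using Submodule.span_induction with
  | mem x hx =>
    obtain ⟨s, rfl⟩ := hx
    simpa using congrArg (tensorSquareMap T f) (hη s)
  | zero => simp
  | add x y _ _ hx hy => simp [TensorProduct.add_tmul, TensorProduct.tmul_add, add_mul, mul_add,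
      hx, hy]
  | smul t x _ hx => simp [← TensorProduct.smul_tmul', hx]

theorem IsSeparableExtension.of_span_range_eq_top (h : IsSeparableExtension R S) {f : S →ₐ[R] S'}
    (hf : Submodule.span T (Set.range f) = ⊤) : IsSeparableExtension T S' := by
  obtain ⟨η, (hη : IsCasimirElement η), hη_one⟩ := h
  exact ⟨tensorSquareMap T f η, hη.map hf, by
    rw [mul'_tensorSquareMap, hη_one, map_one]⟩

theorem IsCentralExtension.of_isBaseChange (hc : IsCentralExtension R S)
    (hs : IsSeparableExtension R S) {f : S →ₐ[R] S'} (hf : IsBaseChange T f.toLinearMap) :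
    IsCentralExtension T S' := by
  obtain ⟨η, (hη : IsCasimirElement η), hη_one⟩ := hs
  obtain ⟨p, hp_one, hp⟩ := (hη.isCentralExtension_iff hη_one).mp hc
  let p' : S' →ₗ[T] T := hf.lift (Algebra.linearMap R T ∘ₗ p)
  have p'_apply (s : S) : p' (f s) = algebraMap R T (p s) := hf.lift_eq _ s
  have hspan := span_range_eq_top_of_isBaseChange hf
  have hη' : IsCasimirElement (tensorSquareMap T f η) := hη.map hspan
  have hη'_one : LinearMap.mul' T S' (tensorSquareMap T f η) = 1 := by
    rw [mul'_tensorSquareMap, hη_one, map_one]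
  have hp'_one : p' 1 = 1 := by rw [← map_one f, p'_apply, hp_one, map_one]
  refine (hη'.isCentralExtension_iff hη'_one).mpr ⟨p', hp'_one, hf.algHom_ext _ _ fun s => ?_⟩
  calc algebraMap T S' (p' (f s))
      = f (algebraMap R S (p s)) := by
        rw [p'_apply, ← IsScalarTower.algebraMap_apply, f.commutes]
    _ = f (sandwich R S η s) := congrArg f (LinearMap.congr_fun hp s)
    _ = sandwich T S' (tensorSquareMap T f η) (f s) := (sandwich_tensorSquareMap f η s).symm

lemma gammaAlg_tensorSquareMap {act : G →* (S ≃ₐ[R] S)} {act' : G →* (S' ≃ₐ[T] S')}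
    {f : S →ₐ[R] S'} (hact : ∀ g s, act' g (f s) = f (act g s)) (x : S ⊗[R] S) :
    gammaAlg act' (tensorSquareMap T f x) = f ∘ gammaAlg act x := by
  induction x with
  | zero => ext; simp
  | tmul a b => ext; simp [hact]
  | add x y hx hy => ext; simp [hx, hy]

theorem IsCentralizingGaloisExtension.of_isBaseChange [Finite G] {act : G →* (S ≃ₐ[R] S)}
    {act' : G →* (S' ≃ₐ[T] S')} (h : IsCentralizingGaloisExtension G R S act) {f : S →ₐ[R] S'}
    (hf : IsBaseChange T f.toLinearMap) (hact : ∀ g s, act' g (f s) = f (act g s)) :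
    IsCentralizingGaloisExtension G T S' act' where
  faithfullyFlat :=
    have := h.faithfullyFlat
    .of_linearEquiv T (T ⊗[R] S) hf.equiv.symm
  bijective := bijective_of_isBaseChange (isBaseChange_tensorProductMap hf hf) (hf.finitePow G)
    h.bijective (gammaAlg act') (gammaAlg_tensorSquareMap hact)

theorem IsGaloisAzumayaExtension.of_isBaseChange [Finite G] {act : G →* (S ≃ₐ[R] S)}
    {act' : G →* (S' ≃ₐ[T] S')} (h : IsGaloisAzumayaExtension G R S act) {f : S →ₐ[R] S'}
    (hf : IsBaseChange T f.toLinearMap) (hact : ∀ g s, act' g (f s) = f (act g s)) :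
    IsGaloisAzumayaExtension G T S' act' := by
  obtain ⟨hGal, hCentral, hSep⟩ := h
  have hspan := span_range_eq_top_of_isBaseChange hf
  exact ⟨hGal.of_isBaseChange hf hact, hCentral.of_isBaseChange hSep hf,
    hSep.of_span_range_eq_top (f := f) hspan⟩

end BaseChange

/-- Let `R` be a commutative ring, `ψ : R → S` a centralizing `G`-Galois
extension and `ϱ : R → T` a homomorphism of commutative rings.  Then the base-changed
extensions `ψ_T : T → T ⊗_R S` (with `G` acting by `g⬝(t ⊗ s) = t ⊗ g(s)`) and
`_Tψ : T → S ⊗_R T` (with `G` acting by `g⬝(s ⊗ t) = g(s) ⊗ t`) are centralizing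
`G`-Galois extensions; if moreover `ψ` is a `G`-Galois-Azumaya extension, then so are
`ψ_T` and `_Tψ`. -/
theorem baseChange_isGalois
    {R : Type*} [CommRing R] {S : Type*} [Ring S] [Algebra R S]
    {T : Type*} [CommRing T] [Algebra R T]
    {G : Type*} [Group G] [Finite G]
    (act : G →* (S ≃ₐ[R] S))
    (hGal : IsCentralizingGaloisExtension G R S act)
    (actL : G →* ((T ⊗[R] S) ≃ₐ[T] (T ⊗[R] S)))
    (hactL : ∀ (g : G) (t : T) (s : S), actL g (t ⊗ₜ[R] s) = t ⊗ₜ[R] (act g s)) :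
    (IsCentralizingGaloisExtension G T (T ⊗[R] S) actL ∧
      (IsGaloisAzumayaExtension G R S act →
        IsGaloisAzumayaExtension G T (T ⊗[R] S) actL)) ∧
    (letI : Algebra T (S ⊗[R] T) := Algebra.TensorProduct.rightAlgebra
     ∀ (actR : G →* ((S ⊗[R] T) ≃ₐ[T] (S ⊗[R] T))),
      (∀ (g : G) (s : S) (t : T), actR g (s ⊗ₜ[R] t) = (act g s) ⊗ₜ[R] t) →
      (IsCentralizingGaloisExtension G T (S ⊗[R] T) actR ∧
        (IsGaloisAzumayaExtension G R S act →
          IsGaloisAzumayaExtension G T (S ⊗[R] T) actR))) := by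
  have hL : IsBaseChange T (includeRight : S →ₐ[R] T ⊗[R] S).toLinearMap :=
    TensorProduct.isBaseChange R S T
  refine ⟨⟨hGal.of_isBaseChange hL fun g s => hactL g 1 s,
    fun hAz => hAz.of_isBaseChange hL fun g s => hactL g 1 s⟩, ?_⟩
  let : Algebra T (S ⊗[R] T) := Algebra.TensorProduct.rightAlgebra
  intro actR hactR
  have hR : IsBaseChange T (includeLeft : S →ₐ[R] S ⊗[R] T).toLinearMap :=
    isBaseChange_includeLeft R S T
  exact ⟨hGal.of_isBaseChange hR fun g s => hactR g s 1,
    fun hAz => hAz.of_isBaseChange hR fun g s => hactR g s 1⟩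

end
end Nuss
end
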